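/- Let A be a d×d invertible matrix with integer entries, inducing the epimorphism T_A on 𝕋^d = ℝ^d/ℤ^d. Then the closure of the set {x ∈ 𝕋^d : (T_A)^n x = 0 for some n ≥ 0} is a proper subset of 𝕋^d if and only if A has an eigenvalue λ ∈ ℂ which is an integral algebraic unit, i.e., both λ and 1/λ are algebraic integers. -/

import Mathlib

/-- The endomorphism of the torus `𝕋^d = (ℝ/ℤ)^d` induced by an integer matrix `A`. -/
noncomputable def torusEndo {d : ℕ} (A : Matrix (Fin d) (Fin d) ℤ) :
    (Fin d → AddCircle (1 : ℝ)) → (Fin d → AddCircle (1 : ℝ)) :=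
  fun x i => ∑ j, A i j • x j


lemma mFourier_eq_toCircle {d : ℕ} (k : Fin d → ℤ) (x : Fin d → AddCircle (1 : ℝ)) :
    UnitAddTorus.mFourier k x = (AddCircle.toCircle (∑ i, k i • x i) : ℂ) := by
  have h : ∀ s : Finset (Fin d), ∏ i ∈ s, (fourier (k i) (x i) : ℂ)
      = (AddCircle.toCircle (∑ i ∈ s, k i • x i) : ℂ) := by
    intro s
    induction s using Finset.induction_on with
    | empty => simp
    | insert a s ha ih =>
      rw [Finset.prod_insert ha, Finset.sum_insert ha, ih, AddCircle.toCircle_add,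
        fourier_apply, Circle.coe_mul]
  exact h Finset.univ

lemma mFourier_add_arg {d : ℕ} (k : Fin d → ℤ) (x y : Fin d → AddCircle (1 : ℝ)) :
    UnitAddTorus.mFourier k (x + y) =
      UnitAddTorus.mFourier k x * UnitAddTorus.mFourier k y := by
  simp only [mFourier_eq_toCircle, Pi.add_apply, smul_add, Finset.sum_add_distrib,
    AddCircle.toCircle_add, Circle.coe_mul]

lemma mFourier_eq_one_iff {d : ℕ} (k : Fin d → ℤ) (x : Fin d → AddCircle (1 : ℝ)) :
    UnitAddTorus.mFourier k x = 1 ↔ ∑ i, k i • x i = 0 := by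
  rw [mFourier_eq_toCircle]
  constructor
  · intro h
    apply AddCircle.injective_toCircle one_ne_zero
    rw [AddCircle.toCircle_zero]
    exact Circle.ext (by simpa using h)
  · intro h
    rw [h]; simp

open MeasureTheory in
lemma integral_mFourier_eq_zero {d : ℕ} (μ : Measure (Fin d → AddCircle (1 : ℝ)))
    (k : Fin d → ℤ) (a : Fin d → AddCircle (1 : ℝ))
    (ha : UnitAddTorus.mFourier k a ≠ 1) (hμ : μ.map (fun x => a + x) = μ) :
    ∫ x, UnitAddTorus.mFourier k x ∂μ = 0 := by
  have h1 : ∫ x, UnitAddTorus.mFourier k x ∂μ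
      = UnitAddTorus.mFourier k a * ∫ x, UnitAddTorus.mFourier k x ∂μ := by
    conv_lhs => rw [← hμ]
    rw [integral_map (by fun_prop)
      (UnitAddTorus.mFourier k).continuous.aestronglyMeasurable, ← integral_const_mul]
    congr 1
    ext x
    exact mFourier_add_arg k a x
  have h2 : (UnitAddTorus.mFourier k a - 1) * ∫ x, UnitAddTorus.mFourier k x ∂μ = 0 := by
    linear_combination -h1
  exact (mul_eq_zero.1 h2).resolve_left (sub_ne_zero.2 ha)

open MeasureTheory in
lemma integral_eq_of_mFourier {d : ℕ} (μ ν : Measure (Fin d → AddCircle (1 : ℝ)))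
    [IsProbabilityMeasure μ] [IsProbabilityMeasure ν]
    (h : ∀ k : Fin d → ℤ, ∫ x, UnitAddTorus.mFourier k x ∂μ = ∫ x, UnitAddTorus.mFourier k x ∂ν)
    (f : C(Fin d → AddCircle (1 : ℝ), ℂ)) :
    ∫ x, f x ∂μ = ∫ x, f x ∂ν := by
  have hintegr : ∀ (m : Measure (Fin d → AddCircle (1 : ℝ))) [IsProbabilityMeasure m]
      (g : C(Fin d → AddCircle (1 : ℝ), ℂ)), Integrable g m := fun m _ g =>
    g.continuous.integrable_of_hasCompactSupport (HasCompactSupport.of_compactSpace _)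
  have hcont : ∀ (m : Measure (Fin d → AddCircle (1 : ℝ))) [IsProbabilityMeasure m],
      Continuous (fun g : C(Fin d → AddCircle (1 : ℝ), ℂ) => ∫ x, g x ∂m) := by
    intro m _
    refine (LipschitzWith.of_dist_le_mul (K := 1) fun g g' => ?_).continuous
    rw [dist_eq_norm, ← integral_sub (hintegr m g) (hintegr m g'), NNReal.coe_one, one_mul]
    refine (norm_integral_le_of_norm_le_const (C := dist g g')
      (Filter.Eventually.of_forall fun x => ?_)).trans (by simp)
    rw [← dist_eq_norm]
    exact ContinuousMap.dist_apply_le_dist x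
  let S : Submodule ℂ C(Fin d → AddCircle (1 : ℝ), ℂ) :=
    { carrier := {g | ∫ x, g x ∂μ = ∫ x, g x ∂ν}
      add_mem' := by
        intro a b ha hb
        simp only [Set.mem_ofPred_eq, ContinuousMap.add_apply] at *
        rw [integral_add (hintegr μ a) (hintegr μ b), integral_add (hintegr ν a) (hintegr ν b), ha, hb]
      zero_mem' := by simp
      smul_mem' := by
        intro c a ha
        simp only [Set.mem_ofPred_eq, ContinuousMap.smul_apply] at *
        rw [integral_smul, integral_smul, ha] }
  have hS : IsClosed (S : Set C(Fin d → AddCircle (1 : ℝ), ℂ)) :=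
    isClosed_eq (hcont μ) (hcont ν)
  have h1 : (Submodule.span ℂ (Set.range (UnitAddTorus.mFourier (d := Fin d)))).topologicalClosure
      ≤ S := by
    apply Submodule.topologicalClosure_minimal _ _ hS
    rw [Submodule.span_le]
    rintro _ ⟨k, rfl⟩
    exact h k
  rw [UnitAddTorus.span_mFourier_closure_eq_top] at h1
  exact h1 (Submodule.mem_top (x := f))

open MeasureTheory in
lemma exists_character {d : ℕ} (K : AddSubgroup (Fin d → AddCircle (1 : ℝ)))
    (hK : IsClosed (K : Set (Fin d → AddCircle (1 : ℝ))))
    (hne : (K : Set (Fin d → AddCircle (1 : ℝ))) ≠ Set.univ) :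
    ∃ k : Fin d → ℤ, k ≠ 0 ∧ ∀ x ∈ K, ∑ i, k i • x i = 0 := by
  by_contra! hcon
  apply hne
  have : CompactSpace K := isCompact_iff_compactSpace.1 hK.isCompact
  let m : Measure K := Measure.addHaarMeasure ⊤
  have : IsProbabilityMeasure m := ⟨Measure.addHaarMeasure_self (K₀ := ⊤)⟩
  let μ : Measure (Fin d → AddCircle (1 : ℝ)) := m.map Subtype.val
  have : IsProbabilityMeasure μ := Measure.isProbabilityMeasure_map (by fun_prop)
  let ν : Measure (Fin d → AddCircle (1 : ℝ)) := Measure.addHaarMeasure ⊤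
  have : IsProbabilityMeasure ν := ⟨Measure.addHaarMeasure_self (K₀ := ⊤)⟩
  have hμ : ∀ a ∈ K, μ.map (fun x => a + x) = μ := by
    intro a ha
    have h0 : m.map (fun x => (⟨a, ha⟩ : K) + x) = m := map_add_left_eq_self m _
    change (m.map Subtype.val).map (fun x => a + x) = m.map Subtype.val
    conv_rhs => rw [← h0]
    rw [Measure.map_map (by fun_prop) (by fun_prop), Measure.map_map (by fun_prop) (by fun_prop)]
    rfl
  have hν : ∀ a, ν.map (fun x => a + x) = ν := fun a => map_add_left_eq_self ν a
  have key := integral_eq_of_mFourier μ ν (fun k => by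
    by_cases hk : k = 0
    · subst hk
      simp [UnitAddTorus.mFourier_zero]
    · obtain ⟨a, haK, ha⟩ := hcon k hk
      have ha' : UnitAddTorus.mFourier k a ≠ 1 := fun h => ha ((mFourier_eq_one_iff k a).1 h)
      rw [integral_mFourier_eq_zero μ k a ha' (hμ a haK),
        integral_mFourier_eq_zero ν k a ha' (hν a)])
  have hc : Continuous (fun x => Metric.infDist x (K : Set (Fin d → AddCircle (1 : ℝ)))) :=
    Metric.continuous_infDist_pt _
  have h1 := key ⟨fun x => ((Metric.infDist x (K : Set (Fin d → AddCircle (1 : ℝ))) : ℝ) : ℂ),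
    by fun_prop⟩
  simp only [ContinuousMap.coe_mk] at h1
  rw [integral_map (by fun_prop)
    (Continuous.aestronglyMeasurable (by fun_prop))] at h1
  have h2 : ∀ x : K, Metric.infDist (x : Fin d → AddCircle (1 : ℝ))
      (K : Set (Fin d → AddCircle (1 : ℝ))) = 0 := fun x => Metric.infDist_zero_of_mem x.2
  simp only [h2, Complex.ofReal_zero, integral_zero] at h1
  rw [integral_complex_ofReal] at h1
  have h3 : ∫ x, Metric.infDist x (K : Set (Fin d → AddCircle (1 : ℝ))) ∂ν = 0 := by
    exact_mod_cast h1.symm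
  rw [Set.eq_univ_iff_forall]
  intro x
  by_contra hx
  have hx' : Metric.infDist x (K : Set (Fin d → AddCircle (1 : ℝ))) ≠ 0 := fun h =>
    hx ((hK.mem_iff_infDist_zero ⟨0, K.zero_mem⟩).2 h)
  have := hc.integral_pos_of_hasCompactSupport_nonneg_nonzero (μ := ν)
    (HasCompactSupport.of_compactSpace _) (fun _ => Metric.infDist_nonneg) hx'
  linarith

lemma sum_vecMul_smul {d : ℕ} (C : Matrix (Fin d) (Fin d) ℤ) (u : Fin d → ℤ)
    (x : Fin d → AddCircle (1 : ℝ)) :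
    ∑ i, (Matrix.vecMul u C) i • x i = ∑ i, u i • torusEndo C x i := by
  simp only [torusEndo, Matrix.vecMul, dotProduct, Finset.sum_smul, Finset.smul_sum, mul_smul]
  exact Finset.sum_comm

lemma torusEndo_mul {d : ℕ} (C D : Matrix (Fin d) (Fin d) ℤ)
    (x : Fin d → AddCircle (1 : ℝ)) :
    torusEndo (C * D) x = torusEndo C (torusEndo D x) := by
  ext i
  simp only [torusEndo, Matrix.mul_apply, Finset.sum_smul, Finset.smul_sum, mul_smul]
  exact Finset.sum_comm

lemma torusEndo_iterate {d : ℕ} (A : Matrix (Fin d) (Fin d) ℤ) (n : ℕ)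
    (x : Fin d → AddCircle (1 : ℝ)) :
    (torusEndo A)^[n] x = torusEndo (A ^ n) x := by
  induction n generalizing x with
  | zero =>
    ext i
    simp [torusEndo, Matrix.one_apply, ite_smul]
  | succ n ih => rw [Function.iterate_succ_apply, ih, pow_succ, torusEndo_mul]

lemma torusEndo_add {d : ℕ} (C : Matrix (Fin d) (Fin d) ℤ)
    (x y : Fin d → AddCircle (1 : ℝ)) :
    torusEndo C (x + y) = torusEndo C x + torusEndo C y := by
  ext i
  simp [torusEndo, smul_add, Finset.sum_add_distrib]

lemma torusEndo_zero {d : ℕ} (C : Matrix (Fin d) (Fin d) ℤ) :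
    torusEndo C 0 = 0 := by
  ext i
  simp [torusEndo]

lemma torusEndo_neg {d : ℕ} (C : Matrix (Fin d) (Fin d) ℤ)
    (x : Fin d → AddCircle (1 : ℝ)) :
    torusEndo C (-x) = - torusEndo C x := by
  ext i
  simp [torusEndo, smul_neg, Finset.sum_neg_distrib]

lemma exists_vecMul_of_annihilates {d : ℕ} (C : Matrix (Fin d) (Fin d) ℤ) (hC : C.det ≠ 0)
    (k : Fin d → ℤ) (h : ∀ x, torusEndo C x = 0 → ∑ i, k i • x i = 0) :
    ∃ u, k = Matrix.vecMul u C := by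
  let R : Matrix (Fin d) (Fin d) ℝ := C.map (Int.castRingHom ℝ)
  have hR : IsUnit R.det := by
    have : R.det = ((C.det : ℤ) : ℝ) := ((Int.castRingHom ℝ).map_det C).symm
    rw [this, isUnit_iff_ne_zero]
    exact_mod_cast hC
  have hsum : ∀ (c : Fin d → ℤ) (y : Fin d → ℝ),
      ∑ i, c i • ((y i : ℝ) : AddCircle (1 : ℝ)) = ((∑ i, (c i : ℝ) * y i : ℝ) : AddCircle (1 : ℝ)) := by
    intro c y
    have : ∀ s : Finset (Fin d), ∑ i ∈ s, c i • ((y i : ℝ) : AddCircle (1 : ℝ))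
        = ((∑ i ∈ s, (c i : ℝ) * y i : ℝ) : AddCircle (1 : ℝ)) := by
      intro s
      induction s using Finset.induction_on with
      | empty => simp
      | insert a s ha ih =>
        rw [Finset.sum_insert ha, Finset.sum_insert ha, ih, AddCircle.coe_add, ← AddCircle.coe_zsmul,
          zsmul_eq_mul]
    exact this _
  have h1 : ∀ j, ∃ n : ℤ, (n : ℝ) = ∑ i, (k i : ℝ) * R⁻¹ i j := by
    intro j
    have h2 := h (fun i => ((R⁻¹ i j : ℝ) : AddCircle (1 : ℝ))) (by
      ext i
      simp only [torusEndo]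
      rw [hsum (fun l => C i l) (fun l => R⁻¹ l j)]
      have h3 : ∑ l, (C i l : ℝ) * R⁻¹ l j = (R * R⁻¹) i j := by
        rw [Matrix.mul_apply]; rfl
      rw [h3, Matrix.mul_nonsing_inv R hR, Matrix.one_apply, Pi.zero_apply,
        AddCircle.coe_eq_zero_iff]
      by_cases hij : i = j
      · exact ⟨1, by simp [hij]⟩
      · exact ⟨0, by simp [hij]⟩)
    rw [hsum k (fun l => R⁻¹ l j), AddCircle.coe_eq_zero_iff] at h2
    obtain ⟨n, hn⟩ := h2
    exact ⟨n, by simpa using hn⟩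
  choose u hu using h1
  refine ⟨u, ?_⟩
  have h4 : (fun j => (u j : ℝ)) = Matrix.vecMul (fun i => (k i : ℝ)) R⁻¹ := by
    ext j
    rw [hu]; rfl
  have h5 : Matrix.vecMul (fun j => (u j : ℝ)) R = (fun i => (k i : ℝ)) := by
    rw [h4, Matrix.vecMul_vecMul, Matrix.nonsing_inv_mul R hR, Matrix.vecMul_one]
  ext i
  have h6 := congrFun h5 i
  simp only [Matrix.vecMul, dotProduct, R, Matrix.map_apply, eq_intCast] at h6 ⊢
  exact_mod_cast h6.symm

open Polynomial in
lemma aeval_mem_spectrum {ι : Type*} [Fintype ι] [DecidableEq ι] (C : Matrix ι ι ℤ) (p : ℤ[X])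
    (lam : ℂ) (h : (Matrix.charpoly (C.map (Int.castRingHom ℂ))).IsRoot lam) :
    aeval lam p ∈ spectrum ℂ ((aeval C p).map (Int.castRingHom ℂ)) := by
  have h1 : lam ∈ spectrum ℂ (C.map (Int.castRingHom ℂ)) :=
    Matrix.mem_spectrum_of_isRoot_charpoly h
  have h2 := spectrum.subset_polynomial_aeval (C.map (Int.castRingHom ℂ))
    (p.map (Int.castRingHom ℂ)) ⟨lam, h1, rfl⟩
  have h3 : (aeval C p).map (Int.castRingHom ℂ)
      = aeval (C.map (Int.castRingHom ℂ)) (p.map (Int.castRingHom ℂ)) := by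
    have h4 := Polynomial.aeval_map_algebraMap (A := ℂ) (C.map (Int.castRingHom ℂ)) p
    have h5 := Polynomial.aeval_algHom_apply
      ((Int.castRingHom ℂ).mapMatrix (m := ι)).toIntAlgHom C p
    exact h5.symm.trans h4.symm
  rw [h3]
  have h6 : aeval lam p = eval lam (p.map (Int.castRingHom ℂ)) := by
    rw [eval_map, aeval_def]; rfl
  rw [h6]
  exact h2

open Polynomial in
lemma exists_vec_of_unit {d : ℕ} (A : Matrix (Fin d) (Fin d) ℤ)
    (hA : A.det ≠ 0) (lam : ℂ) (h : (Matrix.charpoly (A.map (Int.castRingHom ℂ))).IsRoot lam)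
    (hi : IsIntegral ℤ lam⁻¹) :
    ∃ k : Fin d → ℤ, k ≠ 0 ∧ ∀ n : ℕ, ∃ u, k = Matrix.vecMul u (A ^ n) := by
  have hl : lam ≠ 0 := by
    rintro rfl
    have h1 := aeval_mem_spectrum A X 0 h
    rw [aeval_X, aeval_X, spectrum.zero_mem_iff, Matrix.isUnit_iff_isUnit_det] at h1
    apply h1
    have : (A.map (Int.castRingHom ℂ)).det = ((A.det : ℤ) : ℂ) :=
      ((Int.castRingHom ℂ).map_det A).symm
    rw [this, isUnit_iff_ne_zero]
    exact_mod_cast hA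
  obtain ⟨r, hr, hr0⟩ := hi
  let s := r.reverse
  have hs0 : s.coeff 0 = 1 := by
    rw [coeff_zero_reverse]; exact hr
  have hs : aeval lam s = 0 := by
    let _ : Invertible lam⁻¹ := invertibleOfNonzero (inv_ne_zero hl)
    have h1 := (eval₂_reverse_eq_zero_iff (algebraMap ℤ ℂ) lam⁻¹ r).2 hr0
    rw [invOf_eq_inv, inv_inv] at h1
    exact h1
  have hdet : (aeval A s).det = 0 := by
    have h1 := aeval_mem_spectrum A s lam h
    rw [hs, spectrum.zero_mem_iff, Matrix.isUnit_iff_isUnit_det] at h1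
    have : ((aeval A s).map (Int.castRingHom ℂ)).det = (((aeval A s).det : ℤ) : ℂ) :=
      ((Int.castRingHom ℂ).map_det (aeval A s)).symm
    rw [this, isUnit_iff_ne_zero, not_not] at h1
    exact_mod_cast h1
  obtain ⟨k, hk, hk0⟩ := Matrix.exists_vecMul_eq_zero_iff.2 hdet
  refine ⟨k, hk, fun n => ?_⟩
  have hsA : aeval A s = aeval A s.divX * A + 1 := by
    conv_lhs => rw [← divX_mul_X_add s]
    simp [hs0]
  clear hk
  induction n generalizing k with
  | zero => exact ⟨k, by simp⟩
  | succ n ih =>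
    let k' := - Matrix.vecMul k (aeval A s.divX)
    have hk' : Matrix.vecMul k' (aeval A s) = 0 := by
      have hcomm : aeval A s.divX * aeval A s = aeval A s * aeval A s.divX := by
        rw [← map_mul, ← map_mul, mul_comm]
      simp only [k', Matrix.neg_vecMul, Matrix.vecMul_vecMul]
      rw [hcomm, ← Matrix.vecMul_vecMul, hk0]
      simp
    obtain ⟨u, hu⟩ := ih k' hk'
    refine ⟨u, ?_⟩
    rw [pow_succ, ← Matrix.vecMul_vecMul, ← hu]
    rw [hsA, Matrix.vecMul_add, Matrix.vecMul_one, ← Matrix.vecMul_vecMul] at hk0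
    simp only [k', Matrix.neg_vecMul]
    exact (neg_eq_of_add_eq_zero_right hk0).symm

open Polynomial in
lemma exists_unit_of_vec {d : ℕ} (A : Matrix (Fin d) (Fin d) ℤ)
    (hA : A.det ≠ 0) (k : Fin d → ℤ) (hk : k ≠ 0)
    (h : ∀ n : ℕ, ∃ u, k = Matrix.vecMul u (A ^ n)) :
    ∃ lam : ℂ, (Matrix.charpoly (A.map (Int.castRingHom ℂ))).IsRoot lam ∧
        IsIntegral ℤ lam ∧ IsIntegral ℤ lam⁻¹ := by
  let g : (Fin d → ℤ) →ₗ[ℤ] (Fin d → ℤ) := Matrix.vecMulLinear A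
  have hginj : ∀ v w, Matrix.vecMul v A = Matrix.vecMul w A → v = w := by
    intro v w hvw
    by_contra hne
    apply hA
    exact Matrix.exists_vecMul_eq_zero_iff.1
      ⟨v - w, sub_ne_zero.2 hne, by rw [Matrix.sub_vecMul, hvw, sub_self]⟩
  let M : Submodule ℤ (Fin d → ℤ) := ⨅ n : ℕ, LinearMap.range (Matrix.vecMulLinear (A ^ n))
  have hM : ∀ v, v ∈ M ↔ ∀ n : ℕ, ∃ u, Matrix.vecMul u (A ^ n) = v := by
    intro v
    simp only [M, Submodule.mem_iInf, LinearMap.mem_range, Matrix.vecMulLinear_apply]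
  have hgM : ∀ v ∈ M, g v ∈ M := by
    intro v hv
    rw [hM] at hv ⊢
    intro n
    obtain ⟨u, rfl⟩ := hv n
    refine ⟨Matrix.vecMul u A, ?_⟩
    simp only [g, Matrix.vecMulLinear_apply, Matrix.vecMul_vecMul]
    rw [← pow_succ, ← pow_succ']
  let f : M →ₗ[ℤ] M := g.restrict hgM
  have hfv : ∀ m : M, ((f m : M) : Fin d → ℤ) = Matrix.vecMul (m : Fin d → ℤ) A := fun m => rfl
  have hbij : Function.Bijective f := by
    constructor
    · intro v w hvw
      apply Subtype.ext
      apply hginj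
      rw [← hfv, ← hfv, hvw]
    · intro v
      obtain ⟨w, hw⟩ := (hM v).1 v.2 1
      rw [pow_one] at hw
      refine ⟨⟨w, (hM w).2 fun n => ?_⟩, Subtype.ext hw⟩
      obtain ⟨u, hu⟩ := (hM v).1 v.2 (n + 1)
      refine ⟨u, hginj _ _ ?_⟩
      rw [hw, ← hu, pow_succ, Matrix.vecMul_vecMul]
  have hnt : Nontrivial M :=
    ⟨⟨k, (hM k).2 fun n => (h n).imp fun _ hu => hu.symm⟩, 0, fun hc =>
      hk (congrArg Subtype.val hc)⟩
  let b := Module.finBasis ℤ M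
  let C := LinearMap.toMatrix b b f
  have hCdet : IsUnit C.det := by
    rw [LinearMap.det_toMatrix]
    exact LinearEquiv.isUnit_det' (LinearEquiv.ofBijective f hbij)
  have hpos : 0 < Module.finrank ℤ M := Module.finrank_pos
  have hne : Nonempty (Fin (Module.finrank ℤ M)) := ⟨⟨0, hpos⟩⟩
  have haev : ∀ (p : ℤ[X]) (m : M),
      ((aeval f p m : M) : Fin d → ℤ) = Matrix.vecMul (m : Fin d → ℤ) (aeval A p) := by
    intro p m
    induction p using Polynomial.induction_on' with
    | add p q hp hq => simp [hp, hq, Matrix.vecMul_add]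
    | monomial n a =>
      have hpow : ∀ m : M, (((f ^ n) m : M) : Fin d → ℤ) = Matrix.vecMul (m : Fin d → ℤ) (A ^ n) := by
        induction n with
        | zero => intro m; simp
        | succ n ih =>
          intro m
          rw [pow_succ, pow_succ', Module.End.mul_apply, ih, hfv, Matrix.vecMul_vecMul]
      rw [aeval_monomial, aeval_monomial, ← Algebra.smul_def, ← Algebra.smul_def]
      rw [LinearMap.smul_apply, Submodule.coe_smul, hpow, Matrix.vecMul_smul]
  have hf0 : aeval f A.charpoly = 0 := by
    ext1 m
    apply Subtype.ext
    rw [haev, Matrix.aeval_self_charpoly]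
    simp
  have hC0 : aeval C A.charpoly = 0 := by
    have h5 := Polynomial.aeval_algHom_apply (LinearMap.toMatrixAlgEquiv b).toAlgHom f A.charpoly
    have h6 : (LinearMap.toMatrixAlgEquiv b).toAlgHom f = C := rfl
    rw [h6, hf0, map_zero] at h5
    exact h5
  have hmap : ∀ {ι : Type} [Fintype ι] [DecidableEq ι] (D : Matrix ι ι ℤ) (z : ℂ),
      (Matrix.charpoly (D.map (Int.castRingHom ℂ))).IsRoot z ↔ aeval z D.charpoly = 0 := by
    intro ι _ _ D z
    rw [Matrix.charpoly_map, IsRoot, eval_map, aeval_def]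
    rfl
  obtain ⟨lam, hlam⟩ := Complex.exists_root (f := Matrix.charpoly (C.map (Int.castRingHom ℂ))) (by
    rw [Matrix.charpoly_degree_eq_dim]
    simpa using hpos)
  have hintegr : IsIntegral ℤ lam := ⟨C.charpoly, C.charpoly_monic, (hmap C lam).1 hlam⟩
  refine ⟨lam, ?_, hintegr, ?_⟩
  · have h1 := aeval_mem_spectrum C A.charpoly lam hlam
    rw [hC0] at h1
    have h2 : (0 : Matrix (Fin (Module.finrank ℤ M)) (Fin (Module.finrank ℤ M)) ℤ).map
      (Int.castRingHom ℂ) = 0 := by ext; simp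
    rw [h2, spectrum.zero_eq] at h1
    exact (hmap A lam).2 h1
  · have h1 := (hmap C lam).1 hlam
    rw [← divX_mul_X_add C.charpoly] at h1
    simp only [map_add, map_mul, aeval_X, aeval_C] at h1
    have hc : IsUnit (C.charpoly.coeff 0) := by
      rw [Matrix.det_eq_sign_charpoly_coeff] at hCdet
      exact isUnit_of_mul_isUnit_right hCdet
    have hq : IsIntegral ℤ (aeval lam C.charpoly.divX) :=
      Algebra.adjoin_le (S := integralClosure ℤ ℂ) (Set.singleton_subset_iff.2 hintegr)
        (aeval_mem_adjoin_singleton ℤ lam)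
    have hsq := Int.isUnit_mul_self hc
    have hsq' : ((C.charpoly.coeff 0 : ℤ) : ℂ) * ((C.charpoly.coeff 0 : ℤ) : ℂ) = 1 := by
      exact_mod_cast hsq
    have h3 : lam⁻¹ = -((C.charpoly.coeff 0 : ℤ) : ℂ) * aeval lam C.charpoly.divX := by
      rw [eq_intCast] at h1
      apply inv_eq_of_mul_eq_one_right
      linear_combination (-((C.charpoly.coeff 0 : ℤ) : ℂ)) * h1 + hsq'
    rw [h3]
    exact (isIntegral_algebraMap (R := ℤ) (x := C.charpoly.coeff 0)).neg.mul hq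


/-- For an invertible integer matrix `A`, the closure of the set of
points of `𝕋^d` annihilated by some power of `T_A` is a proper subset of `𝕋^d`
iff `A` has an eigenvalue `λ` which is an integral algebraic unit (both `λ` and
`1/λ` are algebraic integers). -/
theorem closure_preTorsion_ne_univ_iff {d : ℕ} (A : Matrix (Fin d) (Fin d) ℤ)
    (hA : A.det ≠ 0) :
    closure {x : Fin d → AddCircle (1 : ℝ) | ∃ n : ℕ, (torusEndo A)^[n] x = 0}
        ≠ Set.univ ↔
      ∃ lam : ℂ, (Matrix.charpoly (A.map (fun n : ℤ => (n : ℂ)))).IsRoot lam ∧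
        IsIntegral ℤ lam ∧ IsIntegral ℤ lam⁻¹ := by
  have hmapeq : A.map (fun n : ℤ => (n : ℂ)) = A.map (Int.castRingHom ℂ) := rfl
  rw [hmapeq]
  constructor
  · intro hne
    let H : AddSubgroup (Fin d → AddCircle (1 : ℝ)) :=
      { carrier := {x | ∃ n : ℕ, (torusEndo A)^[n] x = 0}
        add_mem' := by
          rintro x y ⟨n, hn⟩ ⟨m, hm⟩
          refine ⟨n + m, ?_⟩
          rw [torusEndo_iterate] at *
          rw [torusEndo_add]
          nth_rewrite 1 [add_comm n m]
          rw [pow_add, pow_add, torusEndo_mul, torusEndo_mul, hn, hm, torusEndo_zero,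
            torusEndo_zero, add_zero]
        zero_mem' := ⟨0, rfl⟩
        neg_mem' := by
          rintro x ⟨n, hn⟩
          refine ⟨n, ?_⟩
          rw [torusEndo_iterate] at *
          rw [torusEndo_neg, hn, neg_zero] }
    obtain ⟨k, hk, hkH⟩ := exists_character H.topologicalClosure
      H.isClosed_topologicalClosure hne
    refine exists_unit_of_vec A hA k hk fun n => ?_
    refine exists_vecMul_of_annihilates (A ^ n) ?_ k fun x hx => ?_
    · rw [Matrix.det_pow]
      exact pow_ne_zero n hA
    · exact hkH x (H.le_topologicalClosure ⟨n, by rw [torusEndo_iterate, hx]⟩)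
  · rintro ⟨lam, hroot, -, hinv⟩ huniv
    obtain ⟨k, hk, hkn⟩ := exists_vec_of_unit A hA lam hroot hinv
    have hclosed : IsClosed {x : Fin d → AddCircle (1 : ℝ) | ∑ i, k i • x i = 0} :=
      isClosed_eq (by fun_prop) continuous_const
    have hsub : closure {x : Fin d → AddCircle (1 : ℝ) | ∃ n : ℕ, (torusEndo A)^[n] x = 0}
        ⊆ {x : Fin d → AddCircle (1 : ℝ) | ∑ i, k i • x i = 0} := by
      apply closure_minimal _ hclosed
      rintro x ⟨n, hn⟩
      obtain ⟨u, hu⟩ := hkn n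
      rw [torusEndo_iterate] at hn
      change ∑ i, k i • x i = 0
      rw [hu, sum_vecMul_smul, hn]
      simp
    rw [huniv] at hsub
    apply hk
    ext i
    by_contra hki
    have hki' : (k i : ℝ) ≠ 0 := by exact_mod_cast hki
    -- test the character on a point supported at coordinate `i`
    have h1 : ∑ j, k j • (Pi.single i (((2 * (k i : ℝ))⁻¹ : ℝ) : AddCircle (1 : ℝ)) :
        Fin d → AddCircle (1 : ℝ)) j = 0 := hsub (Set.mem_univ _)
    rw [Finset.sum_eq_single i (by intro j _ hj; simp [hj]) (by simp), Pi.single_eq_same,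
      ← AddCircle.coe_zsmul, AddCircle.coe_eq_zero_iff] at h1
    obtain ⟨n, hn⟩ := h1
    have h2 : (n : ℝ) * 2 = 1 := by
      simp only [zsmul_eq_mul, mul_one] at hn
      rw [hn]
      field_simp
    have h3 : n * 2 = 1 := by exact_mod_cast h2
    omega
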